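/- Let 𝒫 be a finite simple type system on Ω. Then Stab_V(𝒫) is a maximal subgroup of Thompson's group V. -/

import Mathlib

/-!
Write `(α β)` for the element of `V` swapping the cones of two incomparable addresses. Such swaps
generate `V`, and `(α β)` is the product of `(α0 β0)` and `(α1 β1)`, so the swaps of all small cones
already generate `V`. If `α ∼ β`, then `(α β)` lies in the stabilizer `M`. Let `M ≤ H ≤ V`.
Simplicity enters as a dichotomy: a partial equivalence relation `R` such that the deep descendants
of `∼`-equivalent addresses are `R`-related either gives back `∼`, or relates the deep descendants
of any two addresses.

* If there is no absorbing type (a type shared by both children of its members), or there are at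
  least two, then every deep type occurs outside any three given deep cones. Link two types if the
  swaps of their deep representatives are in `H`; conjugating swaps by swaps shows that one such
  swap suffices and that linking is transitive. By the dichotomy, either linked addresses are
  equivalent, so that `H`, which acts on swaps by conjugation, preserves `∼` and `H = M`, or `H`
  contains all swaps of small cones and `H = V`.

* If `b` is of the only absorbing type, then by the dichotomy `α ∼ β` means that the same deep
  descendants of `α` and `β` are of type `b`, so a subgroup preserving this type is contained in
  `M`. If `H ≠ M`, some `h ∈ H` maps a cone `α` not of type `b` to one of type `b`. Conjugating
  swaps of type-`b` cones by `h` gives swaps between cones below `α` and type-`b` cones; all deep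
  types other than that of `b` occur below `α`, and all swaps of small cones follow.
-/

/-- Addresses: finite words over the alphabet `{0,1}` (`Bool`). -/
abbrev Addr : Type := List Bool

/-- Cantor space: infinite words over the alphabet `{0,1}`. -/
abbrev Cantor : Type := ℕ → Bool

/-- Prepend the finite word `α` to the infinite word `w`. -/
def wcat (α : Addr) (w : Cantor) : Cantor := fun n =>
  if h : n < α.length then α.get ⟨n, h⟩ else w (n - α.length)

/-- The cone of the address `α`: the set of infinite words having `α` as a prefix. -/
def cone (α : Addr) : Set Cantor := Set.range (wcat α)

/-- `g` is a prefix substitution map: there are partitions of Cantor space into cones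
`(A i)𝔠` and `(B i)𝔠` such that `g` maps `(A i) w` to `(B i) w`. -/
def IsPrefixSubst (g : Equiv.Perm Cantor) : Prop :=
  ∃ (n : ℕ) (A B : Fin n → Addr),
    (∀ i j, i ≠ j → Disjoint (cone (A i)) (cone (A j))) ∧
    (⋃ i, cone (A i)) = Set.univ ∧
    (∀ i j, i ≠ j → Disjoint (cone (B i)) (cone (B j))) ∧
    (⋃ i, cone (B i)) = Set.univ ∧
    (∀ i w, g (wcat (A i) w) = wcat (B i) w)

/-- Thompson's group `V`, as the set of prefix substitution maps inside `Equiv.Perm Cantor`. -/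
def VSet : Set (Equiv.Perm Cantor) := { g | IsPrefixSubst g }

/-- `α ^ g = β` : `g` maps the cone of `α` onto the cone of `β` by the prefix
substitution `α ↦ β`. -/
def actsOn (g : Equiv.Perm Cantor) (α β : Addr) : Prop :=
  ∀ w, g (wcat α w) = wcat β w

/-- A subset of `Equiv.Perm Cantor` that is closed under the group operations. -/
def IsSubgroupSet (M : Set (Equiv.Perm Cantor)) : Prop :=
  (1 : Equiv.Perm Cantor) ∈ M ∧ (∀ g ∈ M, ∀ h ∈ M, g * h ∈ M) ∧ ∀ g ∈ M, g⁻¹ ∈ M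

/-- `M` is a maximal subgroup of Thompson's group `V`. -/
def IsMaximalSubgroupOfV (M : Set (Equiv.Perm Cantor)) : Prop :=
  IsSubgroupSet M ∧ M ⊆ VSet ∧ M ≠ VSet ∧
    ∀ H : Set (Equiv.Perm Cantor),
      IsSubgroupSet H → M ⊆ H → H ⊆ VSet → H = M ∨ H = VSet

/-- A relation on addresses is coherent if `α ∼ β` implies `α0 ∼ β0` and `α1 ∼ β1`. -/
def Coherent (r : Addr → Addr → Prop) : Prop :=
  ∀ α β, r α β → r (α ++ [false]) (β ++ [false]) ∧ r (α ++ [true]) (β ++ [true])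

/-- A relation on addresses is reduced if `α0 ∼ β0` and `α1 ∼ β1` imply `α ∼ β`. -/
def Reduced (r : Addr → Addr → Prop) : Prop :=
  ∀ α β, r (α ++ [false]) (β ++ [false]) → r (α ++ [true]) (β ++ [true]) → r α β

/-- A type system: a coherent and reduced equivalence relation on addresses
(identified with the partition of `Ω` into its classes). -/
def IsTypeSystem (r : Addr → Addr → Prop) : Prop :=
  Equivalence r ∧ Coherent r ∧ Reduced r

/-- `g` fixes the parts of `r`: for all but finitely many addresses `α`, the image
`α ^ g` is defined and equivalent to `α`. -/
def FixesParts (r : Addr → Addr → Prop) (g : Equiv.Perm Cantor) : Prop :=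
  { α : Addr | ¬ ∃ β, actsOn g α β ∧ r α β }.Finite

/-- `g` stabilizes `r`: on some cofinite set of addresses, `α ^ g` is defined and `g`
preserves equivalence and inequivalence of addresses. -/
def Stabilizes (r : Addr → Addr → Prop) (g : Equiv.Perm Cantor) : Prop :=
  ∃ Ω₀ : Set Addr, Ω₀ᶜ.Finite ∧ (∀ α ∈ Ω₀, ∃ β, actsOn g α β) ∧
    ∀ α ∈ Ω₀, ∀ α' ∈ Ω₀, ∀ β β', actsOn g α β → actsOn g α' β' → (r α α' ↔ r β β')

/-- `Fix_V(𝒫)`: the elements of Thompson's group `V` fixing the parts of `r`. -/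
def FixSet (r : Addr → Addr → Prop) : Set (Equiv.Perm Cantor) :=
  { g | IsPrefixSubst g ∧ FixesParts r g }

/-- `Stab_V(𝒫)`: the elements of Thompson's group `V` stabilizing `r`. -/
def StabSet (r : Addr → Addr → Prop) : Set (Equiv.Perm Cantor) :=
  { g | IsPrefixSubst g ∧ Stabilizes r g }

/-- The type system of `s` is a quotient of that of `r`. -/
def IsQuotientOf (s r : Addr → Addr → Prop) : Prop :=
  IsTypeSystem s ∧ ∀ α β, r α β → s α β

/-- A simple type system: the universal relation is a proper quotient, and every
quotient is either the type system itself or the universal one. -/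
def SimpleTS (r : Addr → Addr → Prop) : Prop :=
  IsTypeSystem r ∧ (∃ α β : Addr, ¬ r α β) ∧
    ∀ s : Addr → Addr → Prop, IsQuotientOf s r →
      (∀ α β, s α β ↔ r α β) ∨ ∀ α β, s α β

/-- The type (equivalence class) of the address `α`. -/
def typeOf (r : Addr → Addr → Prop) (α : Addr) : Set Addr := { β | r α β }

/-! ### Words and cones -/

lemma wcat_nil (w : Cantor) : wcat [] w = w := by
  funext n
  simp [wcat]

lemma wcat_add_length (α : Addr) (w : Cantor) (n : ℕ) : wcat α w (n + α.length) = w n := by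
  simp [wcat]

lemma wcat_apply_of_lt {α : Addr} (w : Cantor) {n : ℕ} (hn : n < α.length) :
    wcat α w n = α[n] := by
  simp [wcat, hn]

lemma wcat_append (α β : Addr) (w : Cantor) : wcat (α ++ β) w = wcat α (wcat β w) := by
  funext n
  simp only [wcat, List.get_eq_getElem, List.getElem_append, List.length_append]
  grind

lemma exists_length_eq_wcat_eq (n : ℕ) (w : Cantor) :
    ∃ α v, α.length = n ∧ wcat α v = w := by
  refine ⟨List.ofFn fun i : Fin n => w i, fun k => w (k + n), List.length_ofFn, ?_⟩
  funext k
  by_cases hk : k < n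
  · simp [wcat, hk]
  · simp [wcat, hk, Nat.sub_add_cancel (not_lt.1 hk)]

lemma exists_wcat_singleton (w : Cantor) : ∃ c v, wcat [c] v = w := by
  obtain ⟨α, v, hα, rfl⟩ := exists_length_eq_wcat_eq 1 w
  obtain ⟨c, rfl⟩ := List.length_eq_one_iff.1 hα
  exact ⟨c, v, rfl⟩

lemma wcat_mem_cone (α : Addr) (w : Cantor) : wcat α w ∈ cone α := ⟨w, rfl⟩

lemma cone_append_subset (α β : Addr) : cone (α ++ β) ⊆ cone α := by
  rintro _ ⟨w, rfl⟩
  exact ⟨wcat β w, (wcat_append α β w).symm⟩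

lemma cone_nil : cone [] = Set.univ := Set.eq_univ_of_forall fun w => ⟨w, wcat_nil w⟩

lemma cone_append_union (α : Addr) : cone (α ++ [false]) ∪ cone (α ++ [true]) = cone α := by
  refine (Set.union_subset (cone_append_subset _ _) (cone_append_subset _ _)).antisymm ?_
  rintro _ ⟨w, rfl⟩
  obtain ⟨c, v, rfl⟩ := exists_wcat_singleton w
  rw [← wcat_append]
  cases c
  · exact Or.inl (wcat_mem_cone _ v)
  · exact Or.inr (wcat_mem_cone _ v)

/-- Incomparability of addresses in the prefix order, encoded as disjointness of their cones. -/
def Perp (α β : Addr) : Prop := Disjoint (cone α) (cone β)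

namespace Perp

variable {α β : Addr}

lemma symm (h : Perp α β) : Perp β α := Disjoint.symm h

lemma append (h : Perp α β) (γ δ : Addr) : Perp (α ++ γ) (β ++ δ) :=
  Disjoint.mono (cone_append_subset α γ) (cone_append_subset β δ) h

lemma append_left (h : Perp α β) (γ : Addr) : Perp (α ++ γ) β :=
  Disjoint.mono_left (cone_append_subset α γ) h

lemma append_right (h : Perp α β) (γ : Addr) : Perp α (β ++ γ) :=
  Disjoint.mono_right (cone_append_subset β γ) h

end Perp

lemma not_perp_append (α γ : Addr) : ¬ Perp α (α ++ γ) := fun h =>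
  Set.disjoint_right.1 h (wcat_mem_cone _ default)
    (cone_append_subset α γ (wcat_mem_cone _ default))

lemma not_perp_self (α : Addr) : ¬ Perp α α := by
  simpa using not_perp_append α []

lemma exists_append_of_not_perp {α β : Addr} (hl : α.length ≤ β.length) (h : ¬ Perp α β) :
    ∃ γ, β = α ++ γ := by
  obtain ⟨_, ⟨w, rfl⟩, ⟨v, hv⟩⟩ := Set.not_disjoint_iff.1 h
  suffices α <+: β from this.imp fun _ => Eq.symm
  refine List.prefix_iff_getElem.2 ⟨hl, fun n hn => ?_⟩
  rw [← wcat_apply_of_lt w hn, ← hv, wcat_apply_of_lt]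

lemma perp_of_length_eq {α β : Addr} (hl : α.length = β.length) (h : α ≠ β) : Perp α β := by
  by_contra hp
  obtain ⟨γ, rfl⟩ := exists_append_of_not_perp hl.le hp
  simp_all

lemma perp_append_singleton (α : Addr) {c d : Bool} (h : c ≠ d) :
    Perp (α ++ [c]) (α ++ [d]) :=
  perp_of_length_eq (by simp) (by simpa using h)

lemma cone_injective : Function.Injective cone := by
  intro α β h
  wlog hl : α.length ≤ β.length generalizing α β
  · exact (this h.symm (by omega)).symm
  obtain ⟨γ, rfl⟩ := exists_append_of_not_perp hl (by rw [Perp, h]; exact not_perp_self β)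
  obtain rfl | ⟨c, γ, rfl⟩ : γ = [] ∨ ∃ c γ', γ = c :: γ' := by cases γ <;> simp
  · simp
  · have hc : Perp (α ++ [!c]) (α ++ c :: γ) := by
      simpa using (perp_append_singleton α (Bool.not_ne_self c)).append_right γ
    have hsub := cone_append_subset α [!c]
    rw [h] at hsub
    exact absurd (Disjoint.mono_right hsub hc) (not_perp_self _)

lemma exists_append_perp (β : Addr) {k : ℕ} {S : Finset Addr} (hS : S.card < 2 ^ k)
    (hlen : ∀ α ∈ S, β.length + k ≤ α.length) : ∃ μ, ∀ α ∈ S, Perp (β ++ μ) α := by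
  classical
  -- one of the `2 ^ k` extensions of `β` by `k` letters is not a prefix of a word in `S`
  have hcard : (Finset.univ.image (List.Vector.toList (α := Bool) (n := k))).card = 2 ^ k := by
    rw [Finset.card_image_of_injective _ List.Vector.toList_injective, Finset.card_univ,
      card_vector, Fintype.card_bool]
  obtain ⟨μ, hμ, hμS⟩ := Finset.exists_mem_notMem_of_card_lt_card
    (s := S.image fun α => (α.drop β.length).take k)
    (Finset.card_image_le.trans_lt (hS.trans_eq hcard.symm))
  obtain ⟨v, -, rfl⟩ := Finset.mem_image.1 hμ
  refine ⟨v.toList, fun α hα => ?_⟩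
  by_contra hp
  obtain ⟨γ, rfl⟩ := exists_append_of_not_perp (by simpa using hlen α hα) hp
  exact hμS (Finset.mem_image.2 ⟨_, hα, by simp⟩)

/-! ### The partial action on addresses and Thompson's group -/

section PartialAction

variable {g h : Equiv.Perm Cantor} {α β α' β' γ : Addr}

lemma actsOn_one (α : Addr) : actsOn 1 α α := fun _ => rfl

namespace actsOn

lemma append (hg : actsOn g α β) (γ : Addr) : actsOn g (α ++ γ) (β ++ γ) := fun w => by
  rw [wcat_append, wcat_append, hg]

lemma mul (hg : actsOn g β γ) (hh : actsOn h α β) : actsOn (g * h) α γ := fun w => by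
  rw [Equiv.Perm.mul_apply, hh, hg]

lemma inv (hg : actsOn g α β) : actsOn g⁻¹ β α := fun w => by
  rw [Equiv.Perm.inv_eq_iff_eq, hg]

lemma image_cone (hg : actsOn g α β) : g '' cone α = cone β := by
  rw [cone, cone, ← Set.range_comp]
  exact congrArg Set.range (funext hg)

lemma unique (hg : actsOn g α β) (hg' : actsOn g α β') : β = β' :=
  cone_injective (hg.image_cone.symm.trans hg'.image_cone)

lemma perp_iff (hg : actsOn g α β) (hg' : actsOn g α' β') : Perp β β' ↔ Perp α α' := by
  rw [Perp, ← hg.image_cone, ← hg'.image_cone, Set.disjoint_image_iff g.injective, Perp]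

end actsOn

lemma actsOn_of_children (h : ∀ c, actsOn g (α ++ [c]) (β ++ [c])) : actsOn g α β := by
  intro w
  obtain ⟨c, v, rfl⟩ := exists_wcat_singleton w
  rw [← wcat_append, ← wcat_append, h]

lemma eq_one_of_actsOn_nil (h : actsOn g [] β) : g = 1 := by
  obtain rfl : β = [] := cone_injective <| by
    rw [← h.image_cone, cone_nil, Set.image_univ, g.range_eq_univ]
  ext1 w
  simpa only [wcat_nil, Equiv.Perm.one_apply] using h w

lemma exists_length_le_of_actsOn (g : Equiv.Perm Cantor) (K : ℕ) :
    ∃ N, ∀ α β, actsOn g α β → N ≤ α.length → K ≤ β.length := by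
  have hfin : (⋃ β ∈ {β : Addr | β.length < K}, {α | actsOn g α β}).Finite :=
    (List.finite_length_lt Bool K).biUnion fun β _ =>
      Set.Subsingleton.finite fun _ h _ h' => h.inv.unique h'.inv
  obtain ⟨N, hN⟩ := (hfin.image List.length).bddAbove
  refine ⟨N + 1, fun α β hαβ hα => ?_⟩
  by_contra! hβ
  have : α.length ≤ N := hN (Set.mem_image_of_mem _ (Set.mem_biUnion hβ hαβ))
  omega

end PartialAction

/-- A finite complete prefix code: a finite set of addresses whose cones partition Cantor space. -/
def IsCode (F : Finset Addr) : Prop :=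
  (F : Set Addr).Pairwise Perp ∧ ∀ w, ∃ α ∈ F, w ∈ cone α

lemma IsCode.exists_prefix {F : Finset Addr} (hF : IsCode F) {β : Addr}
    (hβ : ∀ α ∈ F, α.length ≤ β.length) : ∃ α ∈ F, ∃ γ, β = α ++ γ := by
  obtain ⟨α, hα, hw⟩ := hF.2 (wcat β default)
  exact ⟨α, hα, exists_append_of_not_perp (hβ α hα)
    (Set.not_disjoint_iff.2 ⟨_, hw, wcat_mem_cone β default⟩)⟩

lemma IsCode.image {F : Finset Addr} (hF : IsCode F) {g : Equiv.Perm Cantor} {f : Addr → Addr}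
    (hf : ∀ α ∈ F, actsOn g α (f α)) : IsCode (F.image f) := by
  constructor
  · rw [Finset.coe_image]
    rintro _ ⟨α, hα, rfl⟩ _ ⟨β, hβ, rfl⟩ hne
    exact ((hf α hα).perp_iff (hf β hβ)).2 (hF.1 hα hβ fun h => hne (congrArg f h))
  · intro w
    obtain ⟨α, hα, hw⟩ := hF.2 (g⁻¹ w)
    refine ⟨f α, Finset.mem_image_of_mem f hα, ?_⟩
    rw [← (hf α hα).image_cone]
    exact ⟨g⁻¹ w, hw, g.apply_symm_apply w⟩

lemma exists_isCode_length_eq (N : ℕ) : ∃ F, IsCode F ∧ ∀ α ∈ F, α.length = N := by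
  refine ⟨(List.finite_length_eq Bool N).toFinset, ⟨?_, fun w => ?_⟩, by simp⟩
  · intro α hα β hβ hne
    rw [Set.Finite.coe_toFinset] at hα hβ
    exact perp_of_length_eq (Eq.trans hα (Eq.symm hβ)) hne
  · obtain ⟨α, v, hα, rfl⟩ := exists_length_eq_wcat_eq N w
    exact ⟨α, by simpa using hα, wcat_mem_cone α v⟩

lemma isPrefixSubst_iff_exists_isCode {g : Equiv.Perm Cantor} :
    IsPrefixSubst g ↔ ∃ F, IsCode F ∧ ∀ α ∈ F, ∃ β, actsOn g α β := by
  constructor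
  · rintro ⟨n, A, B, hA, hAcover, -, -, hg⟩
    refine ⟨Finset.univ.image A, ⟨?_, fun w => ?_⟩, by simpa using fun i => ⟨B i, hg i⟩⟩
    · simp only [Finset.coe_image, Finset.coe_univ, Set.image_univ]
      rintro _ ⟨i, rfl⟩ _ ⟨j, rfl⟩ hij
      exact hA i j fun h => hij (congrArg A h)
    · obtain ⟨i, hi⟩ := Set.mem_iUnion.1 (hAcover.symm ▸ Set.mem_univ w)
      exact ⟨A i, Finset.mem_image_of_mem A (Finset.mem_univ i), hi⟩
  · rintro ⟨F, hF, hg⟩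
    let e := F.equivFin.symm
    choose B hB using fun i => hg (e i) (e i).2
    have hdisj : ∀ i j, i ≠ j → Perp (e i : Addr) (e j) := fun i j hij =>
      hF.1 (e i).2 (e j).2 fun h => hij (e.injective (Subtype.ext h))
    have hcover : (⋃ i, cone (e i : Addr)) = Set.univ := Set.eq_univ_of_forall fun w => by
      obtain ⟨α, hα, hw⟩ := hF.2 w
      exact Set.mem_iUnion.2 ⟨e.symm ⟨α, hα⟩, by simpa using hw⟩
    refine ⟨F.card, fun i => e i, B, hdisj, hcover,
      fun i j hij => ((hB i).perp_iff (hB j)).2 (hdisj i j hij), ?_, hB⟩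
    simp_rw [← (hB _).image_cone, ← Set.image_iUnion, hcover, Set.image_univ, g.range_eq_univ]

lemma isPrefixSubst_iff {g : Equiv.Perm Cantor} :
    IsPrefixSubst g ↔ ∃ N, ∀ α : Addr, N ≤ α.length → ∃ β, actsOn g α β := by
  rw [isPrefixSubst_iff_exists_isCode]
  constructor
  · rintro ⟨F, hF, hg⟩
    refine ⟨F.sup List.length, fun α hα => ?_⟩
    obtain ⟨β, hβ, γ, rfl⟩ := hF.exists_prefix fun β hβ => (Finset.le_sup hβ).trans hα
    obtain ⟨β', hβ'⟩ := hg β hβ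
    exact ⟨β' ++ γ, hβ'.append γ⟩
  · rintro ⟨N, hN⟩
    obtain ⟨F, hF, hlen⟩ := exists_isCode_length_eq N
    exact ⟨F, hF, fun α hα => hN α (hlen α hα).ge⟩

/-- Thompson's group `V` (the set `VSet`) as a subgroup of the permutations of Cantor space. -/
def thompsonV : Subgroup (Equiv.Perm Cantor) where
  carrier := VSet
  one_mem' := isPrefixSubst_iff.2 ⟨0, fun α _ => ⟨α, actsOn_one α⟩⟩
  mul_mem' {g h} hg hh := by
    obtain ⟨K, hK⟩ := isPrefixSubst_iff.1 hg
    obtain ⟨N, hN⟩ := isPrefixSubst_iff.1 hh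
    obtain ⟨L, hL⟩ := exists_length_le_of_actsOn h K
    refine isPrefixSubst_iff.2 ⟨max N L, fun α hα => ?_⟩
    obtain ⟨β, hβ⟩ := hN α (le_of_max_le_left hα)
    obtain ⟨γ, hγ⟩ := hK β (hL α β hβ (le_of_max_le_right hα))
    exact ⟨γ, hγ.mul hβ⟩
  inv_mem' := by
    rintro g ⟨n, A, B, hA, hA', hB, hB', hg⟩
    exact ⟨n, B, A, hB, hB', hA, hA', fun i => actsOn.inv (hg i)⟩

lemma mem_thompsonV_iff {g : Equiv.Perm Cantor} :
    g ∈ thompsonV ↔ ∃ N, ∀ α : Addr, N ≤ α.length → ∃ β, actsOn g α β :=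
  isPrefixSubst_iff

/-! ### Cone swaps -/

section ConeSwap

variable {g : Equiv.Perm Cantor} {α β γ α' β' : Addr} {H : Subgroup (Equiv.Perm Cantor)}

open Classical in
/-- The self-map of Cantor space exchanging `α w` and `β w` for all `w` and fixing the remaining
points; the tail `w` is read off by shifting. It is an involution if `α` and `β` are
incomparable. -/
noncomputable def swapFun (α β : Addr) (w : Cantor) : Cantor :=
  if w ∈ cone α then wcat β fun n => w (n + α.length)
  else if w ∈ cone β then wcat α fun n => w (n + β.length)
  else w

lemma swapFun_wcat_left (α β : Addr) (v : Cantor) : swapFun α β (wcat α v) = wcat β v := by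
  simp only [swapFun, wcat_mem_cone, if_true, wcat_add_length]

lemma swapFun_wcat_right (h : Perp α β) (v : Cantor) :
    swapFun α β (wcat β v) = wcat α v := by
  simp only [swapFun, Set.disjoint_right.1 h (wcat_mem_cone β v), if_false, wcat_mem_cone,
    if_true, wcat_add_length]

lemma swapFun_of_notMem {w : Cantor} (hα : w ∉ cone α) (hβ : w ∉ cone β) :
    swapFun α β w = w := by
  rw [swapFun, if_neg hα, if_neg hβ]

lemma swapFun_involutive (h : Perp α β) : Function.Involutive (swapFun α β) := by
  intro w
  by_cases hα : w ∈ cone α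
  · obtain ⟨v, rfl⟩ := hα
    rw [swapFun_wcat_left, swapFun_wcat_right h]
  by_cases hβ : w ∈ cone β
  · obtain ⟨v, rfl⟩ := hβ
    rw [swapFun_wcat_right h, swapFun_wcat_left]
  rw [swapFun_of_notMem hα hβ, swapFun_of_notMem hα hβ]

open Classical in
/-- The element of `V` swapping the cones of two incomparable addresses. For comparable addresses
it is the junk value `1`, so that `coneSwap α β ∈ H` reads: if `α` and `β` are incomparable, then
their swap lies in the subgroup `H`. -/
noncomputable def coneSwap (α β : Addr) : Equiv.Perm Cantor :=
  if h : Perp α β then (swapFun_involutive h).toPerm else 1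

lemma coneSwap_of_not_perp (h : ¬ Perp α β) : coneSwap α β = 1 := dif_neg h

lemma coneSwap_apply (h : Perp α β) (w : Cantor) : coneSwap α β w = swapFun α β w := by
  rw [coneSwap, dif_pos h]
  rfl

lemma actsOn_coneSwap_left (h : Perp α β) : actsOn (coneSwap α β) α β := fun w => by
  rw [coneSwap_apply h, swapFun_wcat_left]

lemma actsOn_coneSwap_right (h : Perp α β) : actsOn (coneSwap α β) β α := fun w => by
  rw [coneSwap_apply h, swapFun_wcat_right h]

lemma coneSwap_apply_of_notMem {w : Cantor} (hα : w ∉ cone α) (hβ : w ∉ cone β) :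
    coneSwap α β w = w := by
  by_cases h : Perp α β
  · rw [coneSwap_apply h, swapFun_of_notMem hα hβ]
  · rw [coneSwap_of_not_perp h, Equiv.Perm.one_apply]

lemma actsOn_coneSwap_of_perp (hα : Perp γ α) (hβ : Perp γ β) : actsOn (coneSwap α β) γ γ :=
  fun w => coneSwap_apply_of_notMem (Set.disjoint_left.1 hα (wcat_mem_cone γ w))
    (Set.disjoint_left.1 hβ (wcat_mem_cone γ w))

lemma eq_coneSwap (h : Perp α β) (hαβ : actsOn g α β) (hβα : actsOn g β α)
    (hfix : ∀ w, w ∉ cone α → w ∉ cone β → g w = w) : g = coneSwap α β := by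
  ext1 w
  by_cases hα : w ∈ cone α
  · obtain ⟨v, rfl⟩ := hα
    rw [hαβ, actsOn_coneSwap_left h]
  by_cases hβ : w ∈ cone β
  · obtain ⟨v, rfl⟩ := hβ
    rw [hβα, actsOn_coneSwap_right h]
  rw [hfix w hα hβ, coneSwap_apply_of_notMem hα hβ]

lemma coneSwap_comm (α β : Addr) : coneSwap α β = coneSwap β α := by
  by_cases h : Perp α β
  · exact eq_coneSwap h.symm (actsOn_coneSwap_right h) (actsOn_coneSwap_left h)
      fun _ hβ hα => coneSwap_apply_of_notMem hα hβ
  · rw [coneSwap_of_not_perp h, coneSwap_of_not_perp fun h' => h h'.symm]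

lemma coneSwap_conj (hα : actsOn g α α') (hβ : actsOn g β β') :
    g * coneSwap α β * g⁻¹ = coneSwap α' β' := by
  by_cases h : Perp α β
  · refine eq_coneSwap ((hα.perp_iff hβ).2 h) ((hβ.mul (actsOn_coneSwap_left h)).mul hα.inv)
      ((hα.mul (actsOn_coneSwap_right h)).mul hβ.inv) fun w hwα hwβ => ?_
    rw [← hα.image_cone] at hwα
    rw [← hβ.image_cone] at hwβ
    have hw : g (g⁻¹ w) = w := g.apply_symm_apply w
    rw [Equiv.Perm.mul_apply, Equiv.Perm.mul_apply, coneSwap_apply_of_notMem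
      (fun h => hwα ⟨_, h, hw⟩) (fun h => hwβ ⟨_, h, hw⟩), hw]
  · rw [coneSwap_of_not_perp h, coneSwap_of_not_perp (mt (hα.perp_iff hβ).1 h), mul_one,
      mul_inv_cancel]

lemma coneSwap_mem_of_conj (hg : g ∈ H) (hα : actsOn g α α') (hβ : actsOn g β β')
    (h : coneSwap α β ∈ H) : coneSwap α' β' ∈ H := by
  rw [← coneSwap_conj hα hβ]
  exact H.mul_mem (H.mul_mem hg h) (H.inv_mem hg)

lemma coneSwap_mem_comm (h : coneSwap α β ∈ H) : coneSwap β α ∈ H := by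
  rwa [coneSwap_comm]

lemma coneSwap_mem_trans (hαβ : Perp α β) (hβγ : Perp β γ) (h : coneSwap α β ∈ H)
    (h' : coneSwap β γ ∈ H) : coneSwap α γ ∈ H := by
  by_cases hαγ : Perp α γ
  · exact coneSwap_mem_of_conj h' (actsOn_coneSwap_of_perp hαβ hαγ) (actsOn_coneSwap_left hβγ) h
  · rw [coneSwap_of_not_perp hαγ]
    exact H.one_mem

lemma coneSwap_append_mul_coneSwap_append (h : Perp α β) :
    coneSwap (α ++ [false]) (β ++ [false]) * coneSwap (α ++ [true]) (β ++ [true]) =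
      coneSwap α β := by
  have hmap : ∀ {α β : Addr}, Perp α β → actsOn (coneSwap (α ++ [false]) (β ++ [false]) *
      coneSwap (α ++ [true]) (β ++ [true])) α β := fun {α β} h => by
    refine actsOn_of_children fun c => ?_
    cases c
    · exact (actsOn_coneSwap_left (h.append _ _)).mul
        (actsOn_coneSwap_of_perp (perp_append_singleton α Bool.false_ne_true) (h.append _ _))
    · exact (actsOn_coneSwap_of_perp (h.symm.append _ _)
        (perp_append_singleton β Bool.false_ne_true.symm)).mul
          (actsOn_coneSwap_left (h.append _ _))
  refine eq_coneSwap h (hmap h) ?_ fun w hα hβ => ?_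
  · rw [coneSwap_comm, coneSwap_comm (α ++ [true])]
    exact hmap h.symm
  · have hfix : ∀ c, coneSwap (α ++ [c]) (β ++ [c]) w = w := fun c =>
      coneSwap_apply_of_notMem (fun hw => hα (cone_append_subset _ _ hw))
        fun hw => hβ (cone_append_subset _ _ hw)
    rw [Equiv.Perm.mul_apply, hfix, hfix]

end ConeSwap

/-! ### Eventual relations -/

/-- `R` holds between all sufficiently deep descendants of `α` and `β` at equal positions. -/
def EventuallyRel (R : Addr → Addr → Prop) (α β : Addr) : Prop :=
  ∃ n, ∀ γ : Addr, n ≤ γ.length → R (α ++ γ) (β ++ γ)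

section EventuallyRel

variable {R : Addr → Addr → Prop} {α β : Addr}

lemma Coherent.append (hR : Coherent R) (h : R α β) (γ : Addr) : R (α ++ γ) (β ++ γ) := by
  induction γ generalizing α β with
  | nil => simpa using h
  | cons c γ ih =>
    have hc : R (α ++ [c]) (β ++ [c]) := by
      cases c
      exacts [(hR α β h).1, (hR α β h).2]
    simpa using ih hc

lemma Reduced.of_eventuallyRel (hR : Reduced R) (h : EventuallyRel R α β) : R α β := by
  obtain ⟨n, hn⟩ := h
  induction n generalizing α β with
  | zero => simpa using hn [] (Nat.zero_le _)
  | succ n ih =>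
    have hchild : ∀ c, R (α ++ [c]) (β ++ [c]) := fun c =>
      ih fun γ hγ => by simpa using hn (c :: γ) (by simpa using hγ)
    exact hR α β (hchild false) (hchild true)

lemma coherent_eventuallyRel (R : Addr → Addr → Prop) : Coherent (EventuallyRel R) := by
  rintro α β ⟨n, hn⟩
  have hchild : ∀ c, EventuallyRel R (α ++ [c]) (β ++ [c]) := fun c =>
    ⟨n, fun γ hγ => by simpa using hn (c :: γ) (by simpa using Nat.le_succ_of_le hγ)⟩
  exact ⟨hchild false, hchild true⟩

lemma reduced_eventuallyRel (R : Addr → Addr → Prop) : Reduced (EventuallyRel R) := by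
  rintro α β ⟨n, hn⟩ ⟨m, hm⟩
  refine ⟨max n m + 1, fun γ hγ => ?_⟩
  obtain ⟨c, γ, rfl⟩ := List.exists_cons_of_length_pos (Nat.zero_lt_of_lt hγ)
  have hlen : max n m ≤ γ.length := by simpa using hγ
  cases c
  · simpa using hn γ (le_of_max_le_left hlen)
  · simpa using hm γ (le_of_max_le_right hlen)

lemma isTypeSystem_eventuallyRel (hrefl : ∀ α, EventuallyRel R α α)
    (hsymm : ∀ {α β}, R α β → R β α) (htrans : ∀ {α β γ}, R α β → R β γ → R α γ) :
    IsTypeSystem (EventuallyRel R) := by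
  refine ⟨⟨hrefl, ?_, ?_⟩, coherent_eventuallyRel R, reduced_eventuallyRel R⟩
  · rintro α β ⟨n, hn⟩
    exact ⟨n, fun γ hγ => hsymm (hn γ hγ)⟩
  · rintro α β γ ⟨n, hn⟩ ⟨m, hm⟩
    exact ⟨max n m, fun δ hδ =>
      htrans (hn δ (le_of_max_le_left hδ)) (hm δ (le_of_max_le_right hδ))⟩

end EventuallyRel

/-! ### Generation of `V` by cone swaps -/

section Generation

variable {F : Finset Addr} {H : Subgroup (Equiv.Perm Cantor)}

lemma IsCode.eq_singleton_or_exists_caret (hF : IsCode F) :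
    F = {[]} ∨ ∃ α, α ++ [false] ∈ F ∧ α ++ [true] ∈ F := by
  obtain ⟨α₀, hα₀, -⟩ := hF.2 default
  obtain ⟨μ, hμ, hmax⟩ := Finset.exists_max_image F List.length ⟨α₀, hα₀⟩
  obtain rfl | ⟨α, c, rfl⟩ : μ = [] ∨ ∃ α c, μ = α ++ [c] := by
    simpa only [List.concat_eq_append] using List.eq_nil_or_concat μ
  · exact Or.inl (Finset.eq_singleton_iff_unique_mem.2
      ⟨hμ, fun β hβ => List.length_eq_zero_iff.1 (Nat.le_zero.1 (hmax β hβ))⟩)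
  suffices hsib : α ++ [!c] ∈ F by
    refine Or.inr ⟨α, ?_⟩
    cases c
    exacts [⟨hμ, hsib⟩, ⟨hsib, hμ⟩]
  obtain ⟨ν, hν, γ, hγ⟩ := hF.exists_prefix (β := α ++ [!c]) (by simpa using hmax)
  obtain rfl | ⟨γ, d, rfl⟩ : γ = [] ∨ ∃ δ d, γ = δ ++ [d] := by
    simpa only [List.concat_eq_append] using List.eq_nil_or_concat γ
  · simpa [hγ] using hν
  · rw [← List.append_assoc] at hγ
    obtain rfl := (List.append_inj' hγ rfl).1
    rw [List.append_assoc] at hμ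
    exact absurd (hF.1 hν hμ (by simp)) (not_perp_append _ _)

lemma IsCode.exists_merge (hF : IsCode F) {α : Addr} (h₀ : α ++ [false] ∈ F)
    (h₁ : α ++ [true] ∈ F) :
    ∃ F', IsCode F' ∧ F'.card < F.card ∧ ∀ β ∈ F', β = α ∨ β ∈ F := by
  set E := F \ {α ++ [false], α ++ [true]} with hE
  have hEF : ∀ β ∈ E, β ∈ F := fun β hβ => (Finset.mem_sdiff.1 hβ).1
  have hperp : ∀ β ∈ E, Perp α β := fun β hβ => by
    have hne : α ++ [false] ≠ β ∧ α ++ [true] ≠ β := by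
      simp only [hE, Finset.mem_sdiff, Finset.mem_insert, Finset.mem_singleton] at hβ
      grind
    rw [Perp, ← cone_append_union, Set.disjoint_union_left]
    exact ⟨hF.1 h₀ (hEF β hβ) hne.1, hF.1 h₁ (hEF β hβ) hne.2⟩
  refine ⟨insert α E, ⟨?_, fun w => ?_⟩, ?_, fun β hβ => ?_⟩
  · rw [Finset.coe_insert]
    exact (hF.1.mono hEF).insert fun β hβ _ => ⟨hperp β hβ, (hperp β hβ).symm⟩
  · obtain ⟨β, hβ, hw⟩ := hF.2 w
    by_cases hβE : β ∈ E
    · exact ⟨β, Finset.mem_insert_of_mem hβE, hw⟩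
    · refine ⟨α, Finset.mem_insert_self α E, ?_⟩
      obtain rfl | rfl : β = α ++ [false] ∨ β = α ++ [true] := by
        simpa [hE, hβ, or_iff_not_imp_left] using hβE
      exacts [cone_append_subset _ _ hw, cone_append_subset _ _ hw]
  · have hsub : {α ++ [false], α ++ [true]} ⊆ F := by simp [Finset.insert_subset_iff, h₀, h₁]
    have hpair : ({α ++ [false], α ++ [true]} : Finset Addr).card = 2 :=
      Finset.card_pair (by simp)
    have hle := Finset.card_insert_le α E
    have hle' := Finset.card_le_card hsub
    have hcard : E.card = F.card - 2 := by rw [hE, Finset.card_sdiff_of_subset hsub, hpair]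
    omega
  · exact (Finset.mem_insert.1 hβ).imp_right (hEF β)

lemma IsCode.actsOn_coneSwap (hF : IsCode F) {α β : F} (hne : α ≠ β) (γ : F) :
    actsOn (coneSwap α β) γ (Equiv.swap α β γ : F) := by
  have hperp : ∀ {α β : F}, α ≠ β → Perp α β := fun {α β} h =>
    hF.1 α.2 β.2 (Subtype.coe_injective.ne h)
  by_cases hγα : γ = α
  · rw [hγα, Equiv.swap_apply_left]
    exact actsOn_coneSwap_left (hperp hne)
  by_cases hγβ : γ = β
  · rw [hγβ, Equiv.swap_apply_right]
    exact actsOn_coneSwap_right (hperp hne)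
  rw [Equiv.swap_apply_of_ne_of_ne hγα hγβ]
  exact actsOn_coneSwap_of_perp (hperp hγα) (hperp hγβ)

lemma IsCode.exists_mem_actsOn_perm (hF : IsCode F) (hH : ∀ α β, coneSwap α β ∈ H)
    (σ : Equiv.Perm F) : ∃ k ∈ H, ∀ γ : F, actsOn k γ (σ γ) := by
  induction σ using Equiv.Perm.swap_induction_on with
  | one => exact ⟨1, H.one_mem, fun γ => actsOn_one γ⟩
  | swap_mul σ α β hne ih =>
    obtain ⟨k, hk, hkσ⟩ := ih
    exact ⟨coneSwap α β * k, H.mul_mem (hH α β) hk,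
      fun γ => (hF.actsOn_coneSwap hne (σ γ)).mul (hkσ γ)⟩

lemma IsCode.mem_of_coneSwap_mem (hF : IsCode F) (hH : ∀ α β, coneSwap α β ∈ H)
    {g : Equiv.Perm Cantor} (hg : ∀ α ∈ F, ∃ β, actsOn g α β) : g ∈ H := by
  induction hn : F.card using Nat.strong_induction_on generalizing F g with
  | _ n ih
  choose! f hf using hg
  have hB := hF.image hf
  have hfB : ∀ {α}, α ∈ F → f α ∈ F.image f := fun {α} => Finset.mem_image_of_mem f
  obtain rfl | ⟨α, hα₀, hα₁⟩ := hF.eq_singleton_or_exists_caret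
  · rw [eq_one_of_actsOn_nil (hf [] (Finset.mem_singleton_self []))]
    exact H.one_mem
  have hne : f (α ++ [false]) ≠ f (α ++ [true]) := fun e => by
    have hp := ((hf _ hα₀).perp_iff (hf _ hα₁)).2 (perp_append_singleton α Bool.false_ne_true)
    exact not_perp_self _ (e ▸ hp)
  obtain hB₀ | ⟨β, hβ₀, hβ₁⟩ := hB.eq_singleton_or_exists_caret
  · exact absurd ((Finset.card_le_one.1 (by rw [hB₀, Finset.card_singleton])) _ (hfB hα₀) _
      (hfB hα₁)) hne
  -- after a permutation of the image code, siblings go to siblings and both pairs can be merged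
  obtain ⟨σ, hσ₀, hσ₁⟩ : ∃ σ : Equiv.Perm (F.image f),
      σ ⟨_, hfB hα₀⟩ = ⟨_, hβ₀⟩ ∧ σ ⟨_, hfB hα₁⟩ = ⟨_, hβ₁⟩ :=
    MulAction.is_two_pretransitive_iff.1 (Equiv.Perm.isMultiplyPretransitive _ 2)
      (by simpa using hne) (by simp)
  obtain ⟨k, hk, hkσ⟩ := hB.exists_mem_actsOn_perm hH σ
  have hkg : ∀ γ (hγ : γ ∈ F), actsOn (k * g) γ (σ ⟨f γ, hfB hγ⟩) := fun γ hγ =>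
    (hkσ ⟨f γ, hfB hγ⟩).mul (hf γ hγ)
  have hkgα : actsOn (k * g) α β := actsOn_of_children fun c => by
    cases c
    · simpa only [hσ₀] using hkg _ hα₀
    · simpa only [hσ₁] using hkg _ hα₁
  obtain ⟨F', hF', hcard, hsub⟩ := hF.exists_merge hα₀ hα₁
  refine (H.mul_mem_cancel_left hk).1 (ih F'.card (hn ▸ hcard) hF' (fun γ hγ => ?_) rfl)
  obtain rfl | hγF := hsub γ hγ
  exacts [⟨β, hkgα⟩, ⟨_, hkg γ hγF⟩]

lemma reduced_coneSwap_mem (H : Subgroup (Equiv.Perm Cantor)) :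
    Reduced fun α β => coneSwap α β ∈ H := by
  intro α β h₀ h₁
  by_cases h : Perp α β
  · rw [← coneSwap_append_mul_coneSwap_append h]
    exact H.mul_mem h₀ h₁
  · rw [coneSwap_of_not_perp h]
    exact H.one_mem

lemma thompsonV_le_of_eventuallyRel
    (hH : ∀ α β, EventuallyRel (fun α β => coneSwap α β ∈ H) α β) : thompsonV ≤ H := by
  intro g hg
  obtain ⟨F, hF, hFg⟩ := isPrefixSubst_iff_exists_isCode.1 hg
  exact hF.mem_of_coneSwap_mem (fun α β => (reduced_coneSwap_mem H).of_eventuallyRel (hH α β)) hFg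

end Generation

/-! ### Type systems and their stabilizers -/

section Stabilizer

variable {r : Addr → Addr → Prop} {g : Equiv.Perm Cantor} {α β γ ξ : Addr}
  {H : Subgroup (Equiv.Perm Cantor)}

lemma mem_stabSet_iff : g ∈ StabSet r ↔ g ∈ thompsonV ∧ ∃ N, ∀ α α' β β' : Addr,
    N ≤ α.length → N ≤ α'.length → actsOn g α β → actsOn g α' β' → (r α α' ↔ r β β') := by
  refine and_congr_right fun hg => ⟨?_, ?_⟩
  · rintro ⟨Ω₀, hfin, -, hΩ₀⟩
    obtain ⟨N, hN⟩ := (hfin.image List.length).bddAbove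
    have hmem : ∀ α : Addr, N + 1 ≤ α.length → α ∈ Ω₀ := fun α hα => by
      by_contra h
      exact absurd (hN (Set.mem_image_of_mem _ h)) (by omega)
    exact ⟨N + 1, fun α α' β β' hα hα' => hΩ₀ α (hmem α hα) α' (hmem α' hα') β β'⟩
  · rintro ⟨N, hN⟩
    obtain ⟨K, hK⟩ := mem_thompsonV_iff.1 hg
    refine ⟨{α | max N K ≤ α.length}, ?_, fun α hα => hK α (le_of_max_le_right hα),
      fun α hα α' hα' β β' => hN α α' β β' (le_of_max_le_left hα) (le_of_max_le_left hα')⟩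
    exact (List.finite_length_lt Bool (max N K)).subset
      fun α (hα : ¬ max N K ≤ α.length) => not_le.1 hα

/-- `Stab_V(𝒫)` (the set `StabSet r`) as a subgroup of the permutations of Cantor space. -/
def stabV (r : Addr → Addr → Prop) : Subgroup (Equiv.Perm Cantor) where
  carrier := StabSet r
  one_mem' := mem_stabSet_iff.2 ⟨thompsonV.one_mem, 0, fun α α' β β' _ _ h h' => by
    rw [h.unique (actsOn_one α), h'.unique (actsOn_one α')]⟩
  mul_mem' {g h} hg hh := by
    obtain ⟨hgV, K, hK⟩ := mem_stabSet_iff.1 hg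
    obtain ⟨hhV, N, hN⟩ := mem_stabSet_iff.1 hh
    obtain ⟨L, hL⟩ := mem_thompsonV_iff.1 hhV
    obtain ⟨M, hM⟩ := exists_length_le_of_actsOn h K
    refine mem_stabSet_iff.2 ⟨thompsonV.mul_mem hgV hhV, max N (max L M),
      fun α α' γ γ' hα hα' hγ hγ' => ?_⟩
    simp only [max_le_iff] at hα hα'
    obtain ⟨β, hβ⟩ := hL α hα.2.1
    obtain ⟨β', hβ'⟩ := hL α' hα'.2.1
    have hgβ : actsOn g β γ := by simpa using hγ.mul hβ.inv
    have hgβ' : actsOn g β' γ' := by simpa using hγ'.mul hβ'.inv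
    exact (hN α α' β β' hα.1 hα'.1 hβ hβ').trans
      (hK β β' γ γ' (hM α β hβ hα.2.2) (hM α' β' hβ' hα'.2.2) hgβ hgβ')
  inv_mem' {g} hg := by
    obtain ⟨hgV, K, hK⟩ := mem_stabSet_iff.1 hg
    obtain ⟨N, hN⟩ := exists_length_le_of_actsOn g⁻¹ K
    exact mem_stabSet_iff.2 ⟨thompsonV.inv_mem hgV, N, fun β β' α α' hβ hβ' h h' =>
      (hK α α' β β' (hN β α h hβ) (hN β' α' h' hβ') (by simpa using h.inv)
        (by simpa using h'.inv)).symm⟩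

lemma mem_stabV_iff : g ∈ stabV r ↔ g ∈ thompsonV ∧ ∃ N, ∀ α α' β β' : Addr,
    N ≤ α.length → N ≤ α'.length → actsOn g α β → actsOn g α' β' → (r α α' ↔ r β β') :=
  mem_stabSet_iff

lemma le_stabV (hV : H ≤ thompsonV) (hH : ∀ g ∈ H, ∃ N, ∀ α α' β β' : Addr,
    N ≤ α.length → N ≤ α'.length → actsOn g α β → actsOn g α' β' → r α α' → r β β') :
    H ≤ stabV r := by
  intro g hg
  obtain ⟨N, hN⟩ := hH g hg
  obtain ⟨K, hK⟩ := hH g⁻¹ (H.inv_mem hg)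
  obtain ⟨M, hM⟩ := exists_length_le_of_actsOn g K
  refine mem_stabV_iff.2 ⟨hV hg, max N M, fun α α' β β' hα hα' h h' => ⟨?_, ?_⟩⟩
  · exact hN α α' β β' (le_of_max_le_left hα) (le_of_max_le_left hα') h h'
  · exact hK β β' α α' (hM α β h (le_of_max_le_right hα)) (hM α' β' h' (le_of_max_le_right hα'))
      h.inv h'.inv

lemma IsTypeSystem.exists_actsOn_coneSwap (hr : IsTypeSystem r) (h : r α β)
    (hα : α.length ≤ ξ.length) (hβ : β.length ≤ ξ.length) :
    ∃ η, actsOn (coneSwap α β) ξ η ∧ r ξ η := by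
  by_cases hαβ : Perp α β
  swap
  · rw [coneSwap_of_not_perp hαβ]
    exact ⟨ξ, actsOn_one ξ, hr.1.refl ξ⟩
  by_cases hαξ : Perp α ξ
  swap
  · obtain ⟨γ, rfl⟩ := exists_append_of_not_perp hα hαξ
    exact ⟨β ++ γ, (actsOn_coneSwap_left hαβ).append γ, hr.2.1.append h γ⟩
  by_cases hβξ : Perp β ξ
  swap
  · obtain ⟨γ, rfl⟩ := exists_append_of_not_perp hβ hβξ
    exact ⟨α ++ γ, (actsOn_coneSwap_right hαβ).append γ, hr.2.1.append (hr.1.symm h) γ⟩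
  exact ⟨ξ, actsOn_coneSwap_of_perp hαξ.symm hβξ.symm, hr.1.refl ξ⟩

lemma coneSwap_mem_thompsonV (α β : Addr) : coneSwap α β ∈ thompsonV := by
  have huniv : IsTypeSystem fun _ _ => True :=
    ⟨⟨fun _ => trivial, fun _ => trivial, fun _ _ => trivial⟩, fun _ _ _ => ⟨trivial, trivial⟩,
      fun _ _ _ _ => trivial⟩
  refine mem_thompsonV_iff.2 ⟨max α.length β.length, fun ξ hξ => ?_⟩
  exact (huniv.exists_actsOn_coneSwap trivial (le_of_max_le_left hξ) (le_of_max_le_right hξ)).imp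
    fun _ => And.left

lemma IsTypeSystem.coneSwap_mem_stabV (hr : IsTypeSystem r) (h : r α β) :
    coneSwap α β ∈ stabV r := by
  refine mem_stabV_iff.2 ⟨coneSwap_mem_thompsonV α β, max α.length β.length,
    fun ξ ξ' η η' hξ hξ' hη hη' => ?_⟩
  have hrel : ∀ ξ η, max α.length β.length ≤ ξ.length → actsOn (coneSwap α β) ξ η → r ξ η := by
    intro ξ η hξ hη
    obtain ⟨η', hη', hξη'⟩ :=
      hr.exists_actsOn_coneSwap h (le_of_max_le_left hξ) (le_of_max_le_right hξ)
    rwa [hη.unique hη']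
  exact ⟨fun e => hr.1.trans (hr.1.symm (hrel ξ η hξ hη)) (hr.1.trans e (hrel ξ' η' hξ' hη')),
    fun e => hr.1.trans (hrel ξ η hξ hη) (hr.1.trans e (hr.1.symm (hrel ξ' η' hξ' hη')))⟩

lemma IsTypeSystem.coneSwap_notMem_stabV (hr : IsTypeSystem r) (hαβ : Perp α β)
    (hαγ : Perp α γ) (hβγ : Perp β γ) (h : r α β) (hne : ¬ r α γ) : coneSwap α γ ∉ stabV r := by
  intro hmem
  obtain ⟨-, N, hN⟩ := mem_stabV_iff.1 hmem
  refine hne (hr.1.trans h (hr.1.symm (hr.2.2.of_eventuallyRel ⟨N, fun δ hδ => ?_⟩)))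
  refine (hN (α ++ δ) (β ++ δ) (γ ++ δ) (β ++ δ) ?_ ?_ ((actsOn_coneSwap_left hαγ).append δ)
    ((actsOn_coneSwap_of_perp hαβ.symm hβγ).append δ)).1 (hr.2.1.append h δ)
  all_goals simp only [List.length_append]; omega

end Stabilizer

/-! ### Simple type systems -/

section Simple

variable {r : Addr → Addr → Prop} {α β b c ξ : Addr}

lemma SimpleTS.eventuallyRel_dichotomy (hr : SimpleTS r) {R : Addr → Addr → Prop}
    (hsymm : ∀ {α β}, R α β → R β α) (htrans : ∀ {α β γ}, R α β → R β γ → R α γ)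
    (hrR : ∀ α β, r α β → EventuallyRel R α β) :
    (∀ α β, EventuallyRel R α β ↔ r α β) ∨ ∀ α β, EventuallyRel R α β :=
  hr.2.2 _ ⟨isTypeSystem_eventuallyRel (fun α => hrR α α (hr.1.1.refl α)) hsymm htrans, hrR⟩

lemma SimpleTS.collapse (hr : SimpleTS r) {K : Addr → Prop}
    (hK : ∀ {α β}, r α β → K α → K β) (hK_append : ∀ {α} γ, K α → K (α ++ γ)) :
    (∀ α β, K α → K β → r α β) ∨
      ∀ α β, EventuallyRel (fun ξ η => r ξ η ∨ K ξ ∧ K η) α β := by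
  refine (hr.eventuallyRel_dichotomy ?_ ?_ ?_).imp_left fun h α β hα hβ => ?_
  · exact Or.imp hr.1.1.symm And.symm
  · rintro α β γ (h | ⟨hα, hβ⟩) (h' | ⟨hβ', hγ⟩)
    · exact Or.inl (hr.1.1.trans h h')
    · exact Or.inr ⟨hK (hr.1.1.symm h) hβ', hγ⟩
    · exact Or.inr ⟨hα, hK h' hβ⟩
    · exact Or.inr ⟨hα, hγ⟩
  · exact fun α β h => ⟨0, fun γ _ => Or.inl (hr.1.2.1.append h γ)⟩
  · exact (h α β).1 ⟨0, fun γ _ => Or.inr ⟨hK_append γ hα, hK_append γ hβ⟩⟩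

lemma SimpleTS.exists_deep_not_rel (hr : SimpleTS r) (N : ℕ) (ν : Addr) :
    ∃ ξ : Addr, N ≤ ξ.length ∧ ¬ r ξ ν := by
  by_contra! h
  obtain ⟨α, β, hαβ⟩ := hr.2.1
  have hdeep : ∀ (α : Addr) {γ : Addr}, N ≤ γ.length → r (α ++ γ) ν := fun α γ hγ =>
    h _ (by rw [List.length_append]; omega)
  exact hαβ (hr.1.2.2.of_eventuallyRel
    ⟨N, fun γ hγ => hr.1.1.trans (hdeep α hγ) (hr.1.1.symm (hdeep β hγ))⟩)

/-- The type of `b` is absorbing: both children of `b`, and hence all its descendants, have the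
type of `b`. -/
def Absorbing (r : Addr → Addr → Prop) (b : Addr) : Prop :=
  r (b ++ [false]) b ∧ r (b ++ [true]) b

/-- The type of `β` occurs among the descendants of `α` (including `α` itself). -/
def Reaches (r : Addr → Addr → Prop) (α β : Addr) : Prop :=
  ∃ δ, r (α ++ δ) β

lemma Absorbing.append (hb : Absorbing r b) (hr : IsTypeSystem r) (h : r α b) (γ : Addr) :
    r (α ++ γ) b := by
  induction γ generalizing α with
  | nil => simpa using h
  | cons c γ ih =>
    have hc : r (b ++ [c]) b := by
      cases c
      exacts [hb.1, hb.2]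
    simpa using ih (hr.1.trans (hr.2.1.append h [c]) hc)

lemma Reaches.congr_right (hr : IsTypeSystem r) (h : r β ξ) (hα : Reaches r α β) :
    Reaches r α ξ :=
  hα.imp fun _ hδ => hr.1.trans hδ h

lemma Reaches.append_right (hr : IsTypeSystem r) (γ : Addr) (hα : Reaches r α β) :
    Reaches r α (β ++ γ) := by
  obtain ⟨δ, hδ⟩ := hα
  exact ⟨δ ++ γ, by simpa using hr.2.1.append hδ γ⟩

lemma reaches_append (hr : IsTypeSystem r) (α γ : Addr) : Reaches r α (α ++ γ) :=
  ⟨γ, hr.1.refl _⟩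

lemma SimpleTS.reaches_of_not_absorbing (hr : SimpleTS r) (hα : ¬ Absorbing r α) :
    ∃ n, ∀ ξ : Addr, n ≤ ξ.length → Reaches r α ξ := by
  have hself : ∀ γ, Reaches r α (α ++ γ) := reaches_append hr.1 α
  obtain h | h := hr.collapse (K := Reaches r α) (Reaches.congr_right hr.1)
    (Reaches.append_right hr.1)
  · have hα' : Reaches r α α := by simpa using hself []
    exact absurd ⟨h _ _ (hself [false]) hα', h _ _ (hself [true]) hα'⟩ hα
  · obtain ⟨n, hn⟩ := h α []
    refine ⟨n, fun ξ hξ => ?_⟩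
    obtain hrel | ⟨-, hreach⟩ := hn ξ hξ
    · exact (hself ξ).congr_right hr.1 hrel
    · exact hreach

lemma SimpleTS.rel_or_reaches (hr : SimpleTS r) (hb : Absorbing r b) (hα : ¬ r α b) :
    ∃ n, ∀ ξ : Addr, n ≤ ξ.length → r ξ b ∨ Reaches r α ξ := by
  have hbb := hr.1.1.refl b
  obtain h | h := hr.collapse (K := fun ξ => r ξ b ∨ Reaches r α ξ)
    (fun h => Or.imp (hr.1.1.trans (hr.1.1.symm h)) (Reaches.congr_right hr.1 h))
    (fun γ => Or.imp (fun h => hb.append hr.1 h γ) (Reaches.append_right hr.1 γ))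
  · exact absurd (h α b (Or.inr (by simpa using reaches_append hr.1 α [])) (Or.inl hbb)) hα
  · obtain ⟨n, hn⟩ := h b []
    refine ⟨n, fun ξ hξ => ?_⟩
    obtain hrel | ⟨-, hξ⟩ := hn ξ hξ
    · exact Or.inl (hr.1.1.trans (hr.1.1.symm hrel) (hb.append hr.1 hbb ξ))
    · exact hξ

lemma SimpleTS.reaches_of_unique_absorbing (hr : SimpleTS r) (hb : Absorbing r b)
    (hu : ∀ c, Absorbing r c → r c b) (α : Addr) : Reaches r α b := by
  by_cases hα : Absorbing r α
  · exact ⟨[], by simpa using hu α hα⟩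
  · obtain ⟨n, hn⟩ := hr.reaches_of_not_absorbing hα
    exact (hn (b ++ List.replicate n false) (by simp)).congr_right hr.1
      (hb.append hr.1 (hr.1.1.refl b) _)

lemma SimpleTS.rel_iff_eventually_absorbing (hr : SimpleTS r) (hb : Absorbing r b) :
    r α β ↔ EventuallyRel (fun ξ η => r ξ b ↔ r η b) α β := by
  obtain h | h := hr.eventuallyRel_dichotomy (R := fun ξ η => r ξ b ↔ r η b) Iff.symm Iff.trans
    fun α β h => ⟨0, fun γ _ =>
      ⟨hr.1.1.trans (hr.1.1.symm (hr.1.2.1.append h γ)), hr.1.1.trans (hr.1.2.1.append h γ)⟩⟩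
  · exact (h α β).symm
  · obtain ⟨ξ, -, hξ⟩ := hr.exists_deep_not_rel 0 b
    have hbγ : ∀ γ, r (b ++ γ) b := hb.append hr.1 (hr.1.1.refl b)
    obtain ⟨n, hn⟩ := h ξ b
    exact absurd (hr.1.2.2.of_eventuallyRel ⟨n, fun γ hγ =>
      hr.1.1.trans ((hn γ hγ).2 (hbγ γ)) (hr.1.1.symm (hbγ γ))⟩) hξ

lemma SimpleTS.infinite_typeOf_of_deep (hr : SimpleTS r) (hα' : ¬ Absorbing r α)
    (hα : (typeOf r α).Infinite) : ∃ n, ∀ ξ : Addr, n ≤ ξ.length → (typeOf r ξ).Infinite := by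
  have happend : ∀ {α} (γ : Addr), (typeOf r α).Infinite → (typeOf r (α ++ γ)).Infinite :=
    fun γ h => (h.image (List.append_left_injective γ).injOn).mono
      (Set.image_subset_iff.2 fun β hβ => hr.1.2.1.append hβ γ)
  obtain h | h := hr.collapse (K := fun ξ => (typeOf r ξ).Infinite)
    (fun {α β} h hα => hα.mono fun γ hγ => hr.1.1.trans (hr.1.1.symm h) hγ) happend
  · exact absurd ⟨h _ _ (happend [false] hα) hα, h _ _ (happend [true] hα) hα⟩ hα'
  · obtain ⟨n, hn⟩ := h [] [false]
    refine ⟨n, fun ξ hξ => by_contra fun hfin => hfin ?_⟩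
    have hrel : ∀ k, r ξ (List.replicate k false ++ ξ) := fun k => by
      induction k with
      | zero => exact hr.1.1.refl ξ
      | succ k ih =>
        have hlen : n ≤ (List.replicate k false ++ ξ).length := by
          rw [List.length_append]; omega
        obtain hstep | ⟨hinf, -⟩ := hn _ hlen
        · exact hr.1.1.trans ih hstep
        · exact absurd (hinf.mono fun β hβ => hr.1.1.trans ih hβ) hfin
    refine Set.infinite_of_injective_forall_mem (f := fun k => List.replicate k false ++ ξ) ?_ hrel
    exact fun k l h => by simpa using congrArg List.length h

end Simple

/-! ### Room for a type -/

section Room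

variable {r : Addr → Addr → Prop} {N : ℕ} {α β ν : Addr}

/-- The type of `ν` occurs arbitrarily deep outside the cones of any three addresses of length at
least `N`; three is what chains of cone swaps need. -/
def RoomFor (r : Addr → Addr → Prop) (N : ℕ) (ν : Addr) : Prop :=
  ∀ (K : ℕ) (α β γ : Addr), N ≤ α.length → N ≤ β.length → N ≤ γ.length →
    ∃ δ : Addr, K ≤ δ.length ∧ r δ ν ∧ Perp δ α ∧ Perp δ β ∧ Perp δ γ

lemma roomFor_of_reaches (h : ∀ μ, Reaches r (β ++ μ) ν) (hN : β.length + 2 ≤ N) :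
    RoomFor r N ν := by
  intro K α₁ α₂ α₃ h₁ h₂ h₃
  obtain ⟨μ, hμ⟩ := exists_append_perp β (k := 2) (S := {α₁, α₂, α₃})
    (Finset.card_le_three.trans_lt (by norm_num))
    (by simpa using ⟨hN.trans h₁, hN.trans h₂, hN.trans h₃⟩)
  obtain ⟨δ, hδ⟩ := h (μ ++ List.replicate K false)
  have hperp : ∀ α ∈ ({α₁, α₂, α₃} : Finset Addr),
      Perp (β ++ (μ ++ List.replicate K false) ++ δ) α := fun α hα => by
    simpa using (hμ α hα).append_left (List.replicate K false ++ δ)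
  refine ⟨_, ?_, hδ, hperp _ (by simp), hperp _ (by simp), hperp _ (by simp)⟩
  simp only [List.length_append, List.length_replicate]
  omega

lemma roomFor_two_of_reaches (h : ∀ α, Reaches r α ν) : RoomFor r 2 ν :=
  roomFor_of_reaches (β := []) (fun μ => h ([] ++ μ)) le_rfl

lemma SimpleTS.exists_roomFor_of_no_absorbing (hr : SimpleTS r) (hno : ∀ b, ¬ Absorbing r b)
    (hα : (typeOf r α).Infinite) : ∃ N, ∀ ν : Addr, N ≤ ν.length → RoomFor r N ν := by
  obtain ⟨n, hn⟩ := hr.infinite_typeOf_of_deep (hno α) hα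
  refine ⟨n + 2, fun ν hν => roomFor_of_reaches (β := []) (fun μ => ?_) (by simp)⟩
  obtain ⟨m, hm⟩ := hr.reaches_of_not_absorbing (hno ([] ++ μ))
  obtain ⟨ξ, hξ, hmξ⟩ := (hn ν (by omega)).exists_notMem_finite (List.finite_length_lt Bool m)
  exact (hm ξ (not_lt.1 hmξ)).congr_right hr.1 (hr.1.1.symm hξ)

lemma SimpleTS.exists_roomFor_of_two_absorbing (hr : SimpleTS r) {b c : Addr}
    (hb : Absorbing r b) (hc : Absorbing r c) (hcb : ¬ r c b) :
    ∃ N, ∀ ν : Addr, N ≤ ν.length → RoomFor r N ν := by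
  have hroom : ∀ {a : Addr}, Absorbing r a → ∀ {N ν}, r ν a → a.length + 2 ≤ N → RoomFor r N ν :=
    fun {a} ha {N ν} hν => roomFor_of_reaches fun μ =>
      ⟨[], by simpa using hr.1.1.trans (ha.append hr.1 (hr.1.1.refl a) μ) (hr.1.1.symm hν)⟩
  obtain ⟨n, hn⟩ := hr.rel_or_reaches hb hcb
  refine ⟨n + b.length + c.length + 2, fun ν hν => ?_⟩
  obtain hνb | ⟨δ, hδ⟩ := hn ν (by omega)
  · exact hroom hb hνb (by omega)
  · exact hroom hc (hr.1.1.trans (hr.1.1.symm hδ) (hc.append hr.1 (hr.1.1.refl c) δ)) (by omega)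

lemma SimpleTS.stabV_ne_thompsonV (hr : SimpleTS r) (hν : RoomFor r N ν) :
    stabV r ≠ thompsonV := by
  intro heq
  obtain ⟨ξ, hξ, hne⟩ := hr.exists_deep_not_rel N ν
  obtain ⟨γ, hγ, hγν, hγξ, -, -⟩ := hν N ξ ξ ξ hξ hξ hξ
  obtain ⟨δ, -, hδν, hδξ, hδγ, -⟩ := hν N ξ γ γ hξ hγ hγ
  refine hr.1.coneSwap_notMem_stabV hδγ.symm hγξ hδξ (hr.1.1.trans hγν (hr.1.1.symm hδν))
    (fun h => hne (hr.1.1.trans (hr.1.1.symm h) hγν)) ?_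
  rw [heq]
  exact coneSwap_mem_thompsonV γ ξ

end Room

/-! ### Type systems in which every deep type has room -/

section AllRoom

variable {r : Addr → Addr → Prop} {N : ℕ} {α β γ : Addr} {H : Subgroup (Equiv.Perm Cantor)}

lemma coneSwap_mem_congr_left (hr : IsTypeSystem r) (hle : stabV r ≤ H) (hroom : RoomFor r N α)
    {α' : Addr} (hα : N ≤ α.length) (hα' : N ≤ α'.length) (hβ : N ≤ β.length) (hrel : r α' α)
    (hαβ : Perp α β) (hmem : coneSwap α β ∈ H) : coneSwap α' β ∈ H := by
  obtain ⟨δ, -, hδ, hδα, hδα', hδβ⟩ := hroom 0 α α' β hα hα' hβ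
  have hδβ_mem : coneSwap δ β ∈ H :=
    coneSwap_mem_trans hδα hαβ (hle (hr.coneSwap_mem_stabV hδ)) hmem
  exact coneSwap_mem_trans hδα'.symm hδβ
    (hle (hr.coneSwap_mem_stabV (hr.1.trans hrel (hr.1.symm hδ)))) hδβ_mem

/-- The cone swaps of all deep representatives of the types of `α` and `β` lie in `H`. -/
def Linked (r : Addr → Addr → Prop) (H : Subgroup (Equiv.Perm Cantor)) (N : ℕ) (α β : Addr) :
    Prop :=
  ∀ α' β' : Addr, N ≤ α'.length → N ≤ β'.length → r α' α → r β' β → coneSwap α' β' ∈ H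

lemma Linked.symm (h : Linked r H N α β) : Linked r H N β α :=
  fun β' α' hβ' hα' hβ hα => coneSwap_mem_comm (h α' β' hα' hβ' hα hβ)

lemma Linked.trans (hβ : RoomFor r N β) (h : Linked r H N α β) (h' : Linked r H N β γ) :
    Linked r H N α γ := by
  intro α' γ' hα' hγ' hα hγ
  obtain ⟨β', hβ', hrel, hβα, hβγ, -⟩ := hβ N α' γ' γ' hα' hγ' hγ'
  exact coneSwap_mem_trans hβα.symm hβγ (h α' β' hα' hβ' hα hrel) (h' β' γ' hβ' hγ' hrel hγ)

lemma linked_of_rel (hr : IsTypeSystem r) (hle : stabV r ≤ H) (h : r α β) : Linked r H N α β :=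
  fun _ _ _ _ hα hβ =>
    hle (hr.coneSwap_mem_stabV (hr.1.trans hα (hr.1.trans h (hr.1.symm hβ))))

lemma linked_of_coneSwap_mem (hr : IsTypeSystem r) (hle : stabV r ≤ H)
    (hroom : ∀ ν : Addr, N ≤ ν.length → RoomFor r N ν) (hα : N ≤ α.length) (hβ : N ≤ β.length)
    (hαβ : Perp α β) (hmem : coneSwap α β ∈ H) : Linked r H N α β := by
  intro α' β' hα' hβ' hrelα hrelβ
  obtain ⟨γ, hγ, hγα, hγβ, hγβ', -⟩ := hroom α hα N β β' β' hβ hβ' hβ'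
  have hγβ_mem : coneSwap γ β ∈ H :=
    coneSwap_mem_congr_left hr hle (hroom α hα) hα hγ hβ hγα hαβ hmem
  have hγβ'_mem : coneSwap γ β' ∈ H := coneSwap_mem_comm <|
    coneSwap_mem_congr_left hr hle (hroom β hβ) hβ hβ' hγ hrelβ hγβ.symm
      (coneSwap_mem_comm hγβ_mem)
  exact coneSwap_mem_congr_left hr hle (hroom γ hγ) hγ hα' hβ' (hr.1.trans hrelα (hr.1.symm hγα))
    hγβ' hγβ'_mem

lemma linked_append_of_coneSwap_mem (hr : IsTypeSystem r) (hle : stabV r ≤ H)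
    (hroom : ∀ ν : Addr, N ≤ ν.length → RoomFor r N ν) (hα : N ≤ α.length) (hβ : N ≤ β.length)
    (hαβ : Perp α β) (hmem : coneSwap α β ∈ H) (δ : Addr) : Linked r H N (α ++ δ) (β ++ δ) := by
  have hαδ : N ≤ (α ++ δ).length := by rw [List.length_append]; omega
  have hβδ : N ≤ (β ++ δ).length := by rw [List.length_append]; omega
  obtain ⟨γ, hγ, hrel, hγα, hγβ, -⟩ := hroom (α ++ δ) hαδ N α β β hα hβ hβ
  -- the swap of `α` and `β` carries the swap `(αδ γ)` of the stabilizer to `(βδ γ)`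
  have hconj : coneSwap (β ++ δ) γ ∈ H :=
    coneSwap_mem_of_conj hmem ((actsOn_coneSwap_left hαβ).append δ)
      (actsOn_coneSwap_of_perp hγα hγβ) (hle (hr.coneSwap_mem_stabV (hr.1.symm hrel)))
  exact (linked_of_rel hr hle (hr.1.symm hrel)).trans (hroom γ hγ)
    (linked_of_coneSwap_mem hr hle hroom hγ hβδ (hγβ.append_right δ) (coneSwap_mem_comm hconj))

lemma le_stabV_of_coneSwap_mem (hr : IsTypeSystem r) (hle : stabV r ≤ H) (hV : H ≤ thompsonV)
    (hroom : ∀ ν : Addr, N ≤ ν.length → RoomFor r N ν)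
    (hrel : ∀ α β : Addr, N ≤ α.length → N ≤ β.length → Perp α β → coneSwap α β ∈ H → r α β) :
    H ≤ stabV r := by
  refine le_stabV hV fun g hg => ?_
  obtain ⟨K, hK⟩ := mem_thompsonV_iff.1 (hV hg)
  obtain ⟨M, hM⟩ := exists_length_le_of_actsOn g N
  have hperp : ∀ α α' β β' : Addr, M ≤ α.length → M ≤ α'.length → actsOn g α β →
      actsOn g α' β' → Perp α α' → r α α' → r β β' := fun α α' β β' hα hα' h h' hαα' e =>
    hrel β β' (hM α β h hα) (hM α' β' h' hα') ((h.perp_iff h').2 hαα')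
      (coneSwap_mem_of_conj hg h h' (hle (hr.coneSwap_mem_stabV e)))
  refine ⟨max N M, fun α α' β β' hα hα' h h' e => ?_⟩
  rw [max_le_iff] at hα hα'
  obtain ⟨γ, hγ, hγα, hγ_perp, hγ_perp', -⟩ :=
    hroom α hα.1 (max K M) α α' α' hα.1 hα'.1 hα'.1
  rw [max_le_iff] at hγ
  obtain ⟨η, hη⟩ := hK γ hγ.1
  exact hr.1.trans (hr.1.symm (hperp γ α η β hγ.2 hα.2 hη h hγ_perp hγα))
    (hperp γ α' η β' hγ.2 hα'.2 hη h' hγ_perp' (hr.1.trans hγα e))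

lemma SimpleTS.le_stabV_or_thompsonV_le_of_roomFor (hr : SimpleTS r)
    (hroom : ∀ ν : Addr, N ≤ ν.length → RoomFor r N ν) (hle : stabV r ≤ H) (hV : H ≤ thompsonV) :
    H ≤ stabV r ∨ thompsonV ≤ H := by
  have hroom_append : ∀ {α γ : Addr}, N ≤ α.length ∨ N ≤ γ.length → RoomFor r N (α ++ γ) :=
    fun h => hroom _ (by rw [List.length_append]; omega)
  obtain h | h := hr.eventuallyRel_dichotomy
    (R := fun α β => RoomFor r N α ∧ RoomFor r N β ∧ Linked r H N α β)
    (fun ⟨hα, hβ, h⟩ => ⟨hβ, hα, h.symm⟩) (fun ⟨hα, hβ, h⟩ ⟨_, hγ, h'⟩ => ⟨hα, hγ, h.trans hβ h'⟩)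
    fun α β h => ⟨N, fun γ hγ => ⟨hroom_append (Or.inr hγ), hroom_append (Or.inr hγ),
      linked_of_rel hr.1 hle (hr.1.2.1.append h γ)⟩⟩
  · refine Or.inl (le_stabV_of_coneSwap_mem hr.1 hle hV hroom fun α β hα hβ hαβ hmem => ?_)
    exact (h α β).1 ⟨0, fun δ _ => ⟨hroom_append (Or.inl hα), hroom_append (Or.inl hβ),
      linked_append_of_coneSwap_mem hr.1 hle hroom hα hβ hαβ hmem δ⟩⟩
  · refine Or.inr (thompsonV_le_of_eventuallyRel fun α β => ?_)
    obtain ⟨n, hn⟩ := h α β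
    refine ⟨max n N, fun γ hγ => ?_⟩
    rw [max_le_iff] at hγ
    refine (hn γ hγ.1).2.2 _ _ ?_ ?_ (hr.1.1.refl _) (hr.1.1.refl _) <;>
    · rw [List.length_append]; omega

end AllRoom

/-! ### Type systems with a unique absorbing type -/

section UniqueAbsorbing

variable {r : Addr → Addr → Prop} {b α β ξ : Addr} {H : Subgroup (Equiv.Perm Cantor)}

lemma SimpleTS.exists_append_not_rel (hr : SimpleTS r) (hb : Absorbing r b) (hα : ¬ r α b)
    (n : ℕ) : ∃ γ : Addr, n ≤ γ.length ∧ ¬ r (α ++ γ) b := by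
  by_contra! h
  exact hα (hr.1.2.2.of_eventuallyRel ⟨n, fun γ hγ =>
    hr.1.1.trans (h γ hγ) (hr.1.1.symm (hb.append hr.1 (hr.1.1.refl b) γ))⟩)

lemma SimpleTS.le_stabV_of_preserves_absorbing (hr : SimpleTS r) (hb : Absorbing r b)
    (hV : H ≤ thompsonV) (hH : ∀ g ∈ H, ∀ α β, actsOn g α β → r β b → r α b) :
    H ≤ stabV r := by
  refine le_stabV hV fun g hg => ⟨0, fun α α' β β' _ _ h h' hαα' => ?_⟩
  have hiff : ∀ {α β}, actsOn g α β → (r α b ↔ r β b) := fun {α β} h =>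
    ⟨hH g⁻¹ (H.inv_mem hg) β α h.inv, hH g hg α β h⟩
  obtain ⟨n, hn⟩ := (hr.rel_iff_eventually_absorbing hb).1 hαα'
  exact (hr.rel_iff_eventually_absorbing hb).2 ⟨n, fun γ hγ =>
    (hiff (h.append γ)).symm.trans ((hn γ hγ).trans (hiff (h'.append γ)))⟩

/-- `H` contains the swaps of the cone of `ξ` with the deep cones of the type of `b`. -/
def LinkedTo (r : Addr → Addr → Prop) (H : Subgroup (Equiv.Perm Cantor)) (b ξ : Addr) : Prop :=
  ∀ δ : Addr, 2 ≤ δ.length → r δ b → coneSwap ξ δ ∈ H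

lemma linkedTo_of_actsOn (hr : IsTypeSystem r) (hb : Absorbing r b)
    (hreach : ∀ α, Reaches r α b) (hle : stabV r ≤ H) {h : Equiv.Perm Cantor} (hh : h ∈ H)
    (hhV : h ∈ thompsonV) (hα : 2 ≤ α.length) (hαβ : actsOn h α β) (hβ : r β b) :
    LinkedTo r H b α := by
  intro δ hδ hδb
  obtain ⟨K, hK⟩ := mem_thompsonV_iff.1 hhV
  obtain ⟨μ, hμK, hμ, hμα, hμδ, -⟩ :=
    roomFor_two_of_reaches hreach K α δ δ hα hδ hδ
  -- extending `μ` by `ζ` keeps its type and makes the type of its image under `h` absorbing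
  obtain ⟨ν, hν⟩ := hK μ hμK
  obtain ⟨ζ, hζ⟩ := hreach ν
  have hμζ : r (μ ++ ζ) b := hb.append hr hμ ζ
  have hαμ : coneSwap α (μ ++ ζ) ∈ H :=
    coneSwap_mem_of_conj (H.inv_mem hh) hαβ.inv (hν.append ζ).inv
      (hle (hr.coneSwap_mem_stabV (hr.1.trans hβ (hr.1.symm hζ))))
  exact coneSwap_mem_trans (hμα.symm.append_right ζ) (hμδ.append_left ζ) hαμ
    (hle (hr.coneSwap_mem_stabV (hr.1.trans hμζ (hr.1.symm hδb))))

lemma linkedTo_of_reaches (hr : IsTypeSystem r) (hroom : RoomFor r 2 b) (hle : stabV r ≤ H)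
    (hα : ∀ γ, LinkedTo r H b (α ++ γ)) (hα₂ : 2 ≤ α.length) (hξ : α.length ≤ ξ.length)
    (hreach : Reaches r α ξ) : LinkedTo r H b ξ := by
  by_cases hαξ : Perp α ξ
  swap
  · obtain ⟨γ, rfl⟩ := exists_append_of_not_perp hξ hαξ
    exact hα γ
  intro δ hδ hδb
  obtain ⟨γ, hγ⟩ := hreach
  obtain ⟨μ, hμ₂, hμ, hμα, hμξ, hμδ⟩ := hroom 2 α ξ δ hα₂ (hα₂.trans hξ) hδ
  have hξμ : coneSwap ξ μ ∈ H :=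
    coneSwap_mem_trans (hαξ.symm.append_right γ) (hμα.symm.append_left γ)
      (hle (hr.coneSwap_mem_stabV (hr.1.symm hγ))) (hα γ μ hμ₂ hμ)
  exact coneSwap_mem_trans hμξ.symm hμδ hξμ
    (hle (hr.coneSwap_mem_stabV (hr.1.trans hμ (hr.1.symm hδb))))

lemma thompsonV_le_of_linkedTo (hroom : RoomFor r 2 b) {n : ℕ}
    (hlinked : ∀ ξ : Addr, n ≤ ξ.length → LinkedTo r H b ξ) : thompsonV ≤ H := by
  refine thompsonV_le_of_eventuallyRel fun α β => ⟨max n 2, fun γ hγ => ?_⟩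
  have hdeep : ∀ α : Addr, n ≤ (α ++ γ).length ∧ 2 ≤ (α ++ γ).length := fun α => by
    rw [List.length_append]; omega
  obtain ⟨hα, hα₂⟩ := hdeep α
  obtain ⟨hβ, hβ₂⟩ := hdeep β
  obtain ⟨δ, hδ₂, hδ, hδα, hδβ, -⟩ := hroom 2 _ _ _ hα₂ hβ₂ hβ₂
  exact coneSwap_mem_trans hδα.symm hδβ (hlinked _ hα δ hδ₂ hδ)
    (coneSwap_mem_comm (hlinked _ hβ δ hδ₂ hδ))

lemma SimpleTS.le_stabV_or_thompsonV_le_of_reaches (hr : SimpleTS r) (hb : Absorbing r b)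
    (hreach : ∀ α, Reaches r α b) (hle : stabV r ≤ H) (hV : H ≤ thompsonV) :
    H ≤ stabV r ∨ thompsonV ≤ H := by
  refine or_iff_not_imp_left.2 fun hne => ?_
  have hroom : RoomFor r 2 b := roomFor_two_of_reaches hreach
  obtain ⟨h, hh, α₀, β₀, h₀, hβ₀, hα₀⟩ : ∃ h ∈ H, ∃ α β, actsOn h α β ∧ r β b ∧ ¬ r α b := by
    by_contra! hpres
    exact hne (hr.le_stabV_of_preserves_absorbing hb hV hpres)
  obtain ⟨γ, hγ, hα⟩ := hr.exists_append_not_rel hb hα₀ 2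
  set α := α₀ ++ γ with hαγ
  have hα₂ : 2 ≤ α.length := by rw [hαγ, List.length_append]; omega
  have hlinked : ∀ δ, LinkedTo r H b (α ++ δ) := fun δ =>
    linkedTo_of_actsOn hr.1 hb hreach hle hh (hV hh) (by rw [List.length_append]; omega)
      ((h₀.append γ).append δ) (hb.append hr.1 (hb.append hr.1 hβ₀ γ) δ)
  obtain ⟨n, hn⟩ := hr.rel_or_reaches hb hα
  refine thompsonV_le_of_linkedTo hroom (n := max n α.length) fun ξ hξ => ?_
  rw [max_le_iff] at hξ
  obtain hξb | hαξ := hn ξ hξ.1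
  · exact fun δ _ hδ => hle (hr.1.coneSwap_mem_stabV (hr.1.1.trans hξb (hr.1.1.symm hδ)))
  · exact linkedTo_of_reaches hr.1 hroom hle hlinked hα₂ hξ.2 hαξ

end UniqueAbsorbing

/-! ### Maximality -/

lemma isMaximalSubgroupOfV_stabSet {r : Addr → Addr → Prop} (hne : stabV r ≠ thompsonV)
    (h : ∀ H : Subgroup (Equiv.Perm Cantor), stabV r ≤ H → H ≤ thompsonV →
      H ≤ stabV r ∨ thompsonV ≤ H) : IsMaximalSubgroupOfV (StabSet r) := by
  refine ⟨⟨(stabV r).one_mem, fun _ hg _ hh => (stabV r).mul_mem hg hh,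
    fun _ => (stabV r).inv_mem⟩, fun _ hg => hg.1, fun heq => hne (SetLike.coe_injective heq), ?_⟩
  intro H hH hle hV
  let K : Subgroup (Equiv.Perm Cantor) :=
    { carrier := H
      one_mem' := hH.1
      mul_mem' := fun {g h} hg hh => hH.2.1 g hg h hh
      inv_mem' := fun {g} hg => hH.2.2 g hg }
  exact (h K hle hV).imp (fun hK => Set.Subset.antisymm hK hle)
    fun hK => Set.Subset.antisymm hV hK

lemma exists_infinite_typeOf {r : Addr → Addr → Prop} (hr : Equivalence r)
    (hfin : (Set.range (typeOf r)).Finite) : ∃ α, (typeOf r α).Infinite := by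
  by_contra! h
  refine Set.infinite_univ ((hfin.biUnion (t := id) ?_).subset fun α _ => ?_)
  · rintro _ ⟨α, rfl⟩
    exact h α
  · exact Set.mem_biUnion (Set.mem_range_self α) (hr.refl α)

theorem stabSet_isMaximal_of_finite_simple_general (r : Addr → Addr → Prop) (hr : SimpleTS r)
    (hinf : ∃ α, (typeOf r α).Infinite) : IsMaximalSubgroupOfV (StabSet r) := by
  by_cases hroom : ∃ N, ∀ ν : Addr, N ≤ ν.length → RoomFor r N ν
  · obtain ⟨N, hN⟩ := hroom
    exact isMaximalSubgroupOfV_stabSet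
      (hr.stabV_ne_thompsonV (hN (List.replicate N false) (by simp)))
      fun H => hr.le_stabV_or_thompsonV_le_of_roomFor hN
  obtain ⟨b, hb⟩ : ∃ b, Absorbing r b := by
    by_contra! hno
    exact hroom (hr.exists_roomFor_of_no_absorbing hno hinf.choose_spec)
  have hreach : ∀ α, Reaches r α b := hr.reaches_of_unique_absorbing hb fun c hc => by
    by_contra hcb
    exact hroom (hr.exists_roomFor_of_two_absorbing hb hc hcb)
  exact isMaximalSubgroupOfV_stabSet
    (hr.stabV_ne_thompsonV (roomFor_two_of_reaches hreach))
    fun H => hr.le_stabV_or_thompsonV_le_of_reaches hb hreach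

/-- The stabilizer of a finite simple type system is a maximal
subgroup of Thompson's group `V`. -/
theorem stabSet_isMaximal_of_finite_simple
    (r : Addr → Addr → Prop) (hr : SimpleTS r)
    (hfin : (Set.range (typeOf r)).Finite) :
    IsMaximalSubgroupOfV (StabSet r) :=
  stabSet_isMaximal_of_finite_simple_general r hr (exists_infinite_typeOf hr.1.1 hfin)
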